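/- arXiv:2604.23723 — 3 statements merged into one kernel-verified Lean document; each statement's English description precedes it below -/
import Mathlib

section
/- Let a < b be real numbers and for each natural number j define the shifted Legendre polynomial p_j on [a,b] by p_j(s) = (-1)^j * Σ_{i=0}^{j} (-1)^i * C(j,i) * C(j+i,i) * ((s-a)/(b-a))^i, where C(·,·) denotes the binomial coefficient. Then the family {p_j} is orthogonal on [a,b]: for all natural numbers i ≠ j, ∫_a^b p_i(s) p_j(s) ds = 0, and for every j, ∫_a^b p_j(s)^2 ds = (b-a)/(2j+1). -/
/-- The shifted Legendre polynomial of degree `j` on the interval `[a, b]`: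
`p_j(s) = (-1)^j * Σ_{i=0}^{j} (-1)^i * C(j,i) * C(j+i,i) * ((s-a)/(b-a))^i`. -/
noncomputable def shiftedLegendre (a b : ℝ) (j : ℕ) (s : ℝ) : ℝ :=
  (-1 : ℝ) ^ j *
    ∑ i ∈ Finset.range (j + 1),
      (-1 : ℝ) ^ i * (j.choose i : ℝ) * ((j + i).choose i : ℝ) * ((s - a) / (b - a)) ^ i

noncomputable def slI (p : Polynomial ℝ) : ℝ := ∫ x in (0:ℝ)..1, p.eval x

lemma slI_add (p q : Polynomial ℝ) : slI (p + q) = slI p + slI q := by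
  simp only [slI, Polynomial.eval_add]
  exact intervalIntegral.integral_add (p.continuous.intervalIntegrable _ _)
    (q.continuous.intervalIntegrable _ _)

lemma slI_C_mul (c : ℝ) (p : Polynomial ℝ) : slI (Polynomial.C c * p) = c * slI p := by
  simp [slI]

lemma slI_deriv (p : Polynomial ℝ) :
    slI (Polynomial.derivative p) = p.eval 1 - p.eval 0 := by
  simp only [slI]
  exact intervalIntegral.integral_eq_sub_of_hasDerivAt (fun x _ => p.hasDerivAt x)
    ((Polynomial.continuous _).intervalIntegrable _ _)

lemma slI_parts (w : Polynomial ℝ) (n : ℕ)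
    (h0 : ∀ k < n, (Polynomial.derivative^[k] w).eval 0 = 0)
    (h1 : ∀ k < n, (Polynomial.derivative^[k] w).eval 1 = 0) (q : Polynomial ℝ) :
    slI (q * Polynomial.derivative^[n] w) = (-1) ^ n * slI (Polynomial.derivative^[n] q * w) := by
  induction n generalizing q with
  | zero => simp
  | succ n ih =>
    have h := slI_deriv (q * Polynomial.derivative^[n] w)
    rw [Polynomial.derivative_mul, slI_add, Polynomial.eval_mul, Polynomial.eval_mul,
      h0 n (by omega), h1 n (by omega), ← Function.iterate_succ_apply' Polynomial.derivative,
      ih (fun k hk => h0 k (by omega)) (fun k hk => h1 k (by omega)),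
      ← Function.iterate_succ_apply Polynomial.derivative] at h
    rw [pow_succ]
    linarith

noncomputable def slW (n : ℕ) : Polynomial ℝ :=
  Polynomial.X ^ n * (1 - Polynomial.X) ^ n

lemma slW_zero (n k : ℕ) (hk : k < n) : (Polynomial.derivative^[k] (slW n)).eval 0 = 0 := by
  have h := Polynomial.pow_sub_dvd_iterate_derivative_of_pow_dvd (p := slW n)
    (q := Polynomial.X) (n := n) k (Dvd.intro _ rfl)
  obtain ⟨r, hr⟩ := h
  rw [hr]
  have : n - k ≠ 0 := by omega
  simp [this]

lemma slW_one (n k : ℕ) (hk : k < n) : (Polynomial.derivative^[k] (slW n)).eval 1 = 0 := by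
  have h := Polynomial.pow_sub_dvd_iterate_derivative_of_pow_dvd (p := slW n)
    (q := 1 - Polynomial.X) (n := n) k (Dvd.intro_left _ rfl)
  obtain ⟨r, hr⟩ := h
  rw [hr]
  have : n - k ≠ 0 := by omega
  simp [this]

lemma slI_beta (n m : ℕ) : slI (Polynomial.X ^ m * (1 - Polynomial.X) ^ n) =
    (m.factorial * n.factorial : ℝ) / (m + n + 1).factorial := by
  induction n generalizing m with
  | zero =>
    simp only [slI, pow_zero, mul_one, Polynomial.eval_pow, Polynomial.eval_X, integral_pow]
    rw [add_zero, Nat.factorial_succ]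
    have := Nat.factorial_ne_zero m
    push_cast
    field_simp
    simp
  | succ n ih =>
    have h := slI_deriv (Polynomial.X ^ (m+1) * (1 - Polynomial.X) ^ (n+1))
    have e : Polynomial.derivative (Polynomial.X ^ (m+1) * (1 - Polynomial.X) ^ (n+1)
        : Polynomial ℝ) =
        Polynomial.C ((m:ℝ)+1) * (Polynomial.X ^ m * (1 - Polynomial.X) ^ (n+1)) +
        Polynomial.C (-((n:ℝ)+1)) * (Polynomial.X ^ (m+1) * (1 - Polynomial.X) ^ n) := by
      simp [Polynomial.derivative_mul, Polynomial.derivative_pow]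
      ring
    rw [e, slI_add, slI_C_mul, slI_C_mul, ih] at h
    simp at h
    have hm : (m:ℝ) + 1 ≠ 0 := by positivity
    rw [show m + 1 + n + 1 = m + (n+1) + 1 by ring, Nat.factorial_succ m] at h
    rw [Nat.factorial_succ n]
    apply mul_left_cancel₀ hm
    push_cast at h ⊢
    linear_combination h

noncomputable def slL (n : ℕ) : Polynomial ℝ :=
  (Polynomial.shiftedLegendre n).map (Int.castRingHom ℝ)

lemma slL_rod (n : ℕ) : Polynomial.C (n.factorial : ℝ) * slL n =
    Polynomial.derivative^[n] (slW n) := by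
  have h := congrArg (Polynomial.map (Int.castRingHom ℝ))
    (Polynomial.factorial_mul_shiftedLegendre_eq n)
  rw [← Polynomial.iterate_derivative_map] at h
  simpa [slL, slW] using h

lemma slL_natDegree (n : ℕ) : (slL n).natDegree = n := by
  rw [slL, Polynomial.natDegree_map_eq_of_injective (RingHom.injective_int _),
    Polynomial.natDegree_shiftedLegendre]

lemma slI_key (q : Polynomial ℝ) (n : ℕ) : (n.factorial : ℝ) * slI (q * slL n) =
    (-1) ^ n * slI (Polynomial.derivative^[n] q * slW n) := by
  rw [← slI_parts _ n (slW_zero n) (slW_one n), ← slL_rod, ← slI_C_mul]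
  congr 1
  ring

lemma slI_lt (i j : ℕ) (h : i < j) : slI (slL i * slL j) = 0 := by
  have := slI_key (slL i) j
  rw [Polynomial.iterate_derivative_eq_zero (by rwa [slL_natDegree])] at this
  have hj : (j.factorial : ℝ) ≠ 0 := by exact_mod_cast Nat.factorial_ne_zero j
  simpa [slI, hj] using this

lemma slI_ne (i j : ℕ) (h : i ≠ j) : slI (slL i * slL j) = 0 := by
  rcases lt_or_gt_of_ne h with h | h
  · exact slI_lt i j h
  · rw [mul_comm]; exact slI_lt j i h

lemma slI_sq (n : ℕ) : slI (slL n * slL n) = 1 / (2 * (n:ℝ) + 1) := by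
  have key := slI_key (slL n) n
  have hd : Polynomial.derivative^[n] (slL n) =
      Polynomial.C ((n.factorial : ℝ) * ((-1) ^ n * ((n + n).choose n : ℝ))) := by
    rw [Polynomial.eq_C_of_natDegree_le_zero (p := Polynomial.derivative^[n] (slL n))
      (by have := Polynomial.natDegree_iterate_derivative (slL n) n
          rw [slL_natDegree] at this; omega)]
    congr 1
    rw [Polynomial.coeff_iterate_derivative]
    simp [slL, Polynomial.coeff_shiftedLegendre, Nat.descFactorial_self]
  rw [hd, slI_C_mul, slW, slI_beta, Nat.factorial_succ] at key
  have hj : (n.factorial : ℝ) ≠ 0 := by exact_mod_cast Nat.factorial_ne_zero n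
  have hc : ((n+n).choose n : ℝ) * n.factorial * n.factorial = (n+n).factorial := by
    exact_mod_cast Nat.add_choose_mul_factorial_mul_factorial n n
  have h2 : ((n+n).factorial : ℝ) ≠ 0 := by exact_mod_cast Nat.factorial_ne_zero _
  have h3 : (2 * (n:ℝ) + 1) ≠ 0 := by positivity
  have hs : ((-1:ℝ) ^ n) * (-1) ^ n = 1 := by rw [← mul_pow]; simp
  apply mul_left_cancel₀ hj
  rw [key]
  push_cast
  rw [← hc] at h2 ⊢
  rw [show (n:ℝ) + n + 1 = 2 * n + 1 by ring]
  have h4 : ((n+n).choose n : ℝ) ≠ 0 := fun h => h2 (by rw [h]; ring)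
  field_simp
  linear_combination hs


lemma sl_eq (a b : ℝ) (j : ℕ) (s : ℝ) :
    shiftedLegendre a b j s = (-1) ^ j * (slL j).eval (s / (b - a) - a / (b - a)) := by
  rw [shiftedLegendre, slL, Polynomial.shiftedLegendre, ← sub_div]
  simp only [Polynomial.eval_map, Polynomial.eval₂_finset_sum, Polynomial.eval₂_mul,
    Polynomial.eval₂_C, Polynomial.eval₂_X_pow]
  congr 1
  refine Finset.sum_congr rfl fun i _ => ?_
  rw [Nat.choose_symm_add]
  simp

lemma sl_int (a b : ℝ) (hab : a < b) (i j : ℕ) :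
    ∫ s in a..b, shiftedLegendre a b i s * shiftedLegendre a b j s =
      (-1) ^ i * (-1) ^ j * ((b - a) * slI (slL i * slL j)) := by
  have hne : b - a ≠ 0 := by linarith
  have h := intervalIntegral.integral_comp_div_sub (a := a) (b := b)
    (fun x => (slL i * slL j).eval x) hne (a / (b - a))
  rw [sub_self, ← sub_div, div_self hne, smul_eq_mul] at h
  rw [slI, ← h, ← intervalIntegral.integral_const_mul]
  congr 1
  ext s
  rw [sl_eq, sl_eq, Polynomial.eval_mul]
  ring

/-- The family of shifted Legendre polynomials is orthogonal on `[a, b]`: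
for `i ≠ j` the integral of `p_i p_j` vanishes, and `∫_a^b p_j^2 = (b-a)/(2j+1)`. -/
theorem shiftedLegendre_orthogonal (a b : ℝ) (hab : a < b) :
    (∀ i j : ℕ, i ≠ j →
      ∫ s in a..b, shiftedLegendre a b i s * shiftedLegendre a b j s = 0) ∧
    (∀ j : ℕ,
      ∫ s in a..b, (shiftedLegendre a b j s) ^ 2 = (b - a) / (2 * (j : ℝ) + 1)) := by
  refine ⟨fun i j h => ?_, fun j => ?_⟩
  · rw [sl_int a b hab, slI_ne i j h]; ring
  · simp only [pow_two]
    rw [sl_int a b hab, slI_sq, ← mul_pow]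
    simp
    rfl
end

section
/- (Generalized free-matrix-based integral inequality, Lemma 1.) Let a < b be real numbers, n, q, N natural numbers with n, q ≥ 1, and let z : [a,b] → ℝ^n be continuously differentiable; set ξ(s) = (ż(s), z(s)) ∈ ℝ^{2n}. Let R ∈ ℝ^{2n×2n} be symmetric positive definite, let ζ ∈ ℝ^q, let Y_1, …, Y_{2N+1} ∈ ℝ^{q×n} be arbitrary matrices, and let M_1, …, M_{2N+1} ∈ ℝ^{n×q} be matrices satisfying the moment conditions M_{2j−1} ζ = ∫_a^b p_{j−1}(s) ż(s) ds for j = 1, …, N+1 and M_{2j} ζ = ∫_a^b p_{j−1}(s) z(s) ds for j = 1, …, N, where p_j is the shifted Legendre polynomial of degree j on [a,b]. Define the block matrices Ȳ = [Y_1 Y_2 ⋯ Y_{2N+1} 0_{q×n}] ∈ ℝ^{q×(2N+2)n}, M̄ = [M_1ᵀ M_2ᵀ ⋯ M_{2N+1}ᵀ 0_{q×n}] ∈ ℝ^{q×(2N+2)n}, and R̄ = blockdiag(R, 3R, 5R, …, (2N+1)R) ∈ ℝ^{(2N+2)n×(2N+2)n}. Then −∫_a^b ξ(s)ᵀ R ξ(s)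 ds ≤ ζᵀ [ (b−a) Ȳ R̄^{−1} Ȳᵀ + Ȳ M̄ᵀ + M̄ Ȳᵀ ] ζ. -/
open Matrix

/-- The block matrix `Ȳ = [Y_1 Y_2 ⋯ Y_{2N+1} 0] ∈ ℝ^{q×(2N+2)n}`, where the column space
`ℝ^{(2N+2)n}` is indexed by `Fin (N+1) × (Fin n ⊕ Fin n)`, the `j`-th `2n`-block holding
the pair `(Y_{2j+1}, Y_{2j+2})` (1-based numbering), with `Y_{2N+2} := 0`. -/
def blockY (n q N : ℕ) (Y : Fin (2 * N + 1) → Matrix (Fin q) (Fin n) ℝ) :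
    Matrix (Fin q) (Fin (N + 1) × (Fin n ⊕ Fin n)) ℝ := fun p c =>
  match c.2 with
  | Sum.inl jj => Y ⟨2 * (c.1 : ℕ), by have := c.1.isLt; omega⟩ p jj
  | Sum.inr jj =>
      if h : 2 * (c.1 : ℕ) + 1 < 2 * N + 1 then Y ⟨2 * (c.1 : ℕ) + 1, h⟩ p jj else 0

/-- The block matrix `M̄ = [M_1ᵀ M_2ᵀ ⋯ M_{2N+1}ᵀ 0] ∈ ℝ^{q×(2N+2)n}`. -/
def blockM (n q N : ℕ) (M : Fin (2 * N + 1) → Matrix (Fin n) (Fin q) ℝ) :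
    Matrix (Fin q) (Fin (N + 1) × (Fin n ⊕ Fin n)) ℝ := fun p c =>
  match c.2 with
  | Sum.inl jj => M ⟨2 * (c.1 : ℕ), by have := c.1.isLt; omega⟩ jj p
  | Sum.inr jj =>
      if h : 2 * (c.1 : ℕ) + 1 < 2 * N + 1 then M ⟨2 * (c.1 : ℕ) + 1, h⟩ jj p else 0

/-- The block-diagonal matrix `R̄ = blockdiag(R, 3R, 5R, …, (2N+1)R)`. -/
def blockR (n N : ℕ) (R : Matrix (Fin n ⊕ Fin n) (Fin n ⊕ Fin n) ℝ) :
    Matrix (Fin (N + 1) × (Fin n ⊕ Fin n)) (Fin (N + 1) × (Fin n ⊕ Fin n)) ℝ := fun p c =>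
  if p.1 = c.1 then (2 * (p.1 : ℕ) + 1 : ℝ) * R p.2 c.2 else 0

noncomputable def legP (j : ℕ) : Polynomial ℝ :=
  (Polynomial.shiftedLegendre j).map (Int.castRingHom ℝ)

lemma legP_coeff (j k : ℕ) :
    (legP j).coeff k = (-1) ^ k * (j.choose k : ℝ) * ((j + k).choose k : ℝ) := by
  have h : (j + k).choose j = (j + k).choose k := Nat.choose_symm_add
  simp [legP, Polynomial.coeff_map, Polynomial.coeff_shiftedLegendre, h]

lemma legP_natDegree (j : ℕ) : (legP j).natDegree = j := by
  unfold legP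
  rw [Polynomial.natDegree_map_eq_of_injective (RingHom.injective_int _),
    Polynomial.natDegree_shiftedLegendre]

lemma shiftedLegendre_eq (a b : ℝ) (j : ℕ) (s : ℝ) :
    shiftedLegendre a b j s = (-1) ^ j * (legP j).eval ((s - a) / (b - a)) := by
  rw [Polynomial.eval_eq_sum_range, legP_natDegree]
  simp [shiftedLegendre, legP_coeff]

lemma legP_comb (j k : ℕ) (hk : k < j) :
    ∑ i ∈ Finset.range (j + 1),
      (-1 : ℝ) ^ i * (j.choose i : ℝ) * ((j + i).choose i : ℝ) / (i + k + 1) = 0 := by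
  set Q : Polynomial ℝ :=
    ∏ m ∈ (Finset.range j).erase k, (Polynomial.X + Polynomial.C ((m : ℝ) + 1)) with hQ
  have hdeg : Q.natDegree < j := by
    rw [hQ, Polynomial.natDegree_prod_of_monic _ _ (fun m _ => Polynomial.monic_X_add_C _)]
    simp only [Polynomial.natDegree_X_add_C, Finset.sum_const, smul_eq_mul, mul_one]
    rw [Finset.card_erase_of_mem (Finset.mem_range.2 hk), Finset.card_range]
    omega
  have h0 := congrFun (Polynomial.fwdDiff_iter_eq_zero_of_degree_lt hdeg) 0
  rw [fwdDiff_iter_eq_sum_shift] at h0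
  have key : ∀ i ∈ Finset.range (j + 1),
      (-1 : ℝ) ^ i * (j.choose i : ℝ) * ((j + i).choose i : ℝ) / (i + k + 1)
      = ((-1) ^ j / (j.factorial : ℝ)) *
        (((-1 : ℤ) ^ (j - i) * (j.choose i : ℤ)) • Q.eval (0 + i • (1 : ℝ))) := by
    intro i hi
    have hij : i ≤ j := by simpa [Nat.lt_succ_iff] using hi
    have hsgn : (-1 : ℝ) ^ i = (-1) ^ j * (-1) ^ (j - i) := by
      rw [← pow_add, show j + (j - i) = i + 2 * (j - i) by omega, pow_add, pow_mul]; simp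
    have h1 : (j.factorial : ℝ) * ((j + i).choose i : ℝ) = ((i : ℝ) + k + 1) * Q.eval (i : ℝ) := by
      have e := Nat.ascFactorial_eq_factorial_mul_choose i j
      rw [add_comm i j, Nat.choose_symm_add] at e
      rw [← Nat.cast_mul, ← e, Nat.ascFactorial_eq_prod_range, Nat.cast_prod,
        ← Finset.mul_prod_erase _ _ (Finset.mem_range.2 hk), hQ, Polynomial.eval_prod]
      congr 1
      · push_cast; ring
      · apply Finset.prod_congr rfl
        intro m _
        simp; ring
    have hpos : ((i : ℝ) + k + 1) ≠ 0 := by positivity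
    have hf : (j.factorial : ℝ) ≠ 0 := by positivity
    have h2 : ((j + i).choose i : ℝ) = ((i : ℝ) + k + 1) * Q.eval (i : ℝ) / j.factorial := by
      field_simp; linarith
    rw [h2, hsgn]
    simp
    field_simp
  rw [Finset.sum_congr rfl key, ← Finset.mul_sum, h0]
  simp

lemma legP_int_pow (j k : ℕ) (hk : k < j) :
    ∫ x in (0:ℝ)..1, (legP j).eval x * x ^ k = 0 := by
  have : ∀ x : ℝ, (legP j).eval x * x ^ k =
      ∑ i ∈ Finset.range (j + 1),
        ((-1 : ℝ) ^ i * (j.choose i : ℝ) * ((j + i).choose i : ℝ)) * x ^ (i + k) := by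
    intro x
    rw [Polynomial.eval_eq_sum_range, legP_natDegree, Finset.sum_mul]
    apply Finset.sum_congr rfl
    intro i _
    rw [legP_coeff]; ring
  simp_rw [this]
  rw [intervalIntegral.integral_finsetSum
    (fun i _ => (by fun_prop : Continuous _).intervalIntegrable _ _)]
  refine Eq.trans (Finset.sum_congr rfl fun i _ => ?_) (legP_comb j k hk)
  rw [intervalIntegral.integral_const_mul, integral_pow]
  simp
  ring

lemma legP_int_poly (j : ℕ) (P : Polynomial ℝ) (hP : ∀ k, j ≤ k → P.coeff k = 0) :
    ∫ x in (0:ℝ)..1, (legP j).eval x * P.eval x = 0 := by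
  have : ∀ x : ℝ, (legP j).eval x * P.eval x =
      ∑ i ∈ Finset.range (P.natDegree + 1), P.coeff i * ((legP j).eval x * x ^ i) := by
    intro x
    rw [Polynomial.eval_eq_sum_range (p := P), Finset.mul_sum]
    apply Finset.sum_congr rfl
    intro i _
    ring
  simp_rw [this]
  rw [intervalIntegral.integral_finsetSum
    (fun i _ => (by fun_prop : Continuous _).intervalIntegrable _ _)]
  apply Finset.sum_eq_zero
  intro i _
  rw [intervalIntegral.integral_const_mul]
  by_cases h : i < j
  · rw [legP_int_pow j i h, mul_zero]
  · rw [hP i (by omega), zero_mul]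

lemma legP_one (j : ℕ) : (legP j).eval 1 ^ 2 = 1 := by
  have h := Polynomial.shiftedLegendre_eval_symm j (1 : ℝ)
  have e : ∀ x : ℝ, Polynomial.aeval x (Polynomial.shiftedLegendre j) = (legP j).eval x := by
    intro x
    simp [legP, Polynomial.aeval_def, Polynomial.eval_map]
  rw [e, e, sub_self, ← Polynomial.coeff_zero_eq_eval_zero, legP_coeff] at h
  rw [h]
  simp [← pow_mul]

lemma legP_int_sq (j : ℕ) :
    ∫ x in (0:ℝ)..1, (legP j).eval x * (legP j).eval x = 1 / (2 * j + 1) := by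
  set I := ∫ x in (0:ℝ)..1, (legP j).eval x * (legP j).eval x with hI
  have hlow := legP_int_poly j
    (Polynomial.X * Polynomial.derivative (legP j) - Polynomial.C (j : ℝ) * legP j) (by
      intro k hk
      rcases Nat.eq_zero_or_pos k with rfl | hk0
      · have : j = 0 := by omega
        subst this
        simp
      · obtain ⟨m, rfl⟩ : ∃ m, k = m + 1 := ⟨k - 1, by omega⟩
        rw [Polynomial.coeff_sub, Polynomial.coeff_X_mul, Polynomial.coeff_derivative,
          Polynomial.coeff_C_mul]
        rcases hk.eq_or_lt with h | h
        · rw [h]; push_cast; ring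
        · rw [Polynomial.coeff_eq_zero_of_natDegree_lt (by rw [legP_natDegree]; exact h)]
          ring)
  have hftc := intervalIntegral.integral_eq_sub_of_hasDerivAt
    (a := (0:ℝ)) (b := 1)
    (f := fun x => (Polynomial.X * (legP j) ^ 2).eval x)
    (f' := fun x => (Polynomial.derivative (Polynomial.X * (legP j) ^ 2)).eval x)
    (fun x _ => Polynomial.hasDerivAt _ x)
    ((by fun_prop : Continuous _).intervalIntegrable _ _)
  have e : ∀ x : ℝ, (Polynomial.derivative (Polynomial.X * (legP j) ^ 2)).eval x
      = (2 * j + 1) * ((legP j).eval x * (legP j).eval x) +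
        2 * ((legP j).eval x * (Polynomial.X * Polynomial.derivative (legP j)
          - Polynomial.C (j : ℝ) * legP j).eval x) := by
    intro x
    simp [Polynomial.derivative_pow]
    ring
  simp_rw [e] at hftc
  rw [intervalIntegral.integral_add ((by fun_prop : Continuous _).intervalIntegrable _ _)
    ((by fun_prop : Continuous _).intervalIntegrable _ _),
    intervalIntegral.integral_const_mul, intervalIntegral.integral_const_mul, hlow, ← hI] at hftc
  simp [legP_one] at hftc
  field_simp
  linarith

lemma legP_orth (i j : ℕ) :
    ∫ x in (0:ℝ)..1, (legP i).eval x * (legP j).eval x = if i = j then 1 / (2 * (j:ℝ) + 1) else 0 := by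
  split_ifs with h
  · subst h; exact legP_int_sq i
  · rcases lt_or_gt_of_ne h with h | h
    · simp_rw [mul_comm (Polynomial.eval _ (legP i))]
      exact legP_int_poly _ _ fun k hk =>
        Polynomial.coeff_eq_zero_of_natDegree_lt (by rw [legP_natDegree]; omega)
    · exact legP_int_poly _ _ fun k hk =>
        Polynomial.coeff_eq_zero_of_natDegree_lt (by rw [legP_natDegree]; omega)

lemma shiftedLegendre_cont (a b : ℝ) (j : ℕ) : Continuous (shiftedLegendre a b j) := by
  unfold shiftedLegendre
  fun_prop

lemma shiftedLegendre_orth (a b : ℝ) (hab : a < b) (i j : ℕ) :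
    ∫ s in a..b, shiftedLegendre a b i s * shiftedLegendre a b j s
      = if i = j then (b - a) / (2 * (j:ℝ) + 1) else 0 := by
  have hne : b - a ≠ 0 := by linarith
  have e : ∀ s, shiftedLegendre a b i s * shiftedLegendre a b j s =
      (-1) ^ (i + j) * ((legP i).eval ((s - a) / (b - a)) * (legP j).eval ((s - a) / (b - a))) := by
    intro s
    rw [shiftedLegendre_eq, shiftedLegendre_eq]; ring
  simp_rw [e]
  rw [intervalIntegral.integral_const_mul,
    intervalIntegral.integral_comp_sub_right
      (fun x => (legP i).eval (x / (b - a)) * (legP j).eval (x / (b - a))) a,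
    intervalIntegral.integral_comp_div (fun x => (legP i).eval x * (legP j).eval x) hne,
    sub_self, zero_div, div_self hne, legP_orth]
  split_ifs with h
  · subst h
    rw [← two_mul, pow_mul]; simp; ring
  · simp

lemma blockR_inv (n N : ℕ) (R : Matrix (Fin n ⊕ Fin n) (Fin n ⊕ Fin n) ℝ) (hR : R.PosDef) :
    (blockR n N R)⁻¹ = Matrix.of fun p c =>
      if p.1 = c.1 then (2 * (p.1 : ℕ) + 1 : ℝ)⁻¹ * R⁻¹ p.2 c.2 else 0 := by
  apply Matrix.inv_eq_right_inv
  have hu : R * R⁻¹ = 1 := Matrix.mul_nonsing_inv _ ((Matrix.isUnit_iff_isUnit_det _).1 hR.isUnit)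
  ext ⟨i, p⟩ ⟨j, c⟩
  have hpc := congrFun (congrFun hu p) c
  rw [Matrix.mul_apply] at hpc
  rw [Matrix.mul_apply, Fintype.sum_prod_type]
  have e : ∀ x : Fin (N+1), ∑ y, blockR n N R (i, p) (x, y) *
      (if (x, y).1 = (j, c).1 then (2 * ((x, y).1 : ℕ) + 1 : ℝ)⁻¹ * R⁻¹ (x, y).2 (j, c).2 else 0)
      = if i = x then (if x = j then (1 : Matrix _ _ ℝ) p c else 0) else 0 := by
    intro x
    by_cases h1 : i = x
    · by_cases h2 : x = j
      · subst h1 h2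
        simp only [blockR, if_true]
        rw [← hpc]
        apply Finset.sum_congr rfl
        intro y _
        have : (2 * ((i : ℕ) : ℝ) + 1) ≠ 0 := by positivity
        field_simp
      · simp [h2]
    · simp [blockR, h1]
  refine (Finset.sum_congr rfl fun x _ => e x).trans ?_
  simp [Matrix.one_apply]
  by_cases h : i = j <;> simp [h]

lemma quad_expand {n N : ℕ} (R : Matrix (Fin n ⊕ Fin n) (Fin n ⊕ Fin n) ℝ) (hR : R.PosDef)
    (y : Fin (N + 1) → (Fin n ⊕ Fin n) → ℝ) (c : Fin (N + 1) → ℝ) (x : (Fin n ⊕ Fin n) → ℝ) :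
    -(x ⬝ᵥ R *ᵥ x) ≤ 2 * ∑ j, c j * (y j ⬝ᵥ x)
      + ∑ i, ∑ j, (c i * c j) * (y i ⬝ᵥ R⁻¹ *ᵥ y j) := by
  have hu : R * R⁻¹ = 1 := Matrix.mul_nonsing_inv _ ((Matrix.isUnit_iff_isUnit_det _).1 hR.isUnit)
  have hsym : Rᵀ = R := by simpa using hR.isHermitian.eq
  have hns := hR.posSemidef.dotProduct_mulVec_nonneg (x + R⁻¹ *ᵥ (∑ j, c j • y j))
  set w := ∑ j, c j • y j with hw
  have h1 : R *ᵥ (R⁻¹ *ᵥ w) = w := by rw [Matrix.mulVec_mulVec, hu, Matrix.one_mulVec]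
  have h2 : (R⁻¹ *ᵥ w) ⬝ᵥ (R *ᵥ x) = w ⬝ᵥ x := by
    rw [Matrix.dotProduct_mulVec, ← Matrix.mulVec_transpose, hsym, h1]
  have h3 : w ⬝ᵥ x = ∑ j, c j * (y j ⬝ᵥ x) := by
    simp [hw, sum_dotProduct]
  have h4 : w ⬝ᵥ R⁻¹ *ᵥ w = ∑ i, ∑ j, (c i * c j) * (y i ⬝ᵥ R⁻¹ *ᵥ y j) := by
    simp only [hw, sum_dotProduct, Matrix.mulVec_sum, dotProduct_sum, Matrix.mulVec_smul,
      smul_dotProduct, dotProduct_smul, smul_eq_mul, mul_assoc, Finset.mul_sum]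
    rw [Finset.sum_comm]
    exact Finset.sum_congr rfl fun i _ => Finset.sum_congr rfl fun j _ => by ring
  rw [← h3, ← h4]
  simp only [star_trivial, Matrix.mulVec_add, add_dotProduct, dotProduct_add, h1, h2] at hns
  rw [dotProduct_comm x w, dotProduct_comm (R⁻¹ *ᵥ w) w] at hns
  linarith

lemma rhs_expand (n q N : ℕ) (a b : ℝ) (R : Matrix (Fin n ⊕ Fin n) (Fin n ⊕ Fin n) ℝ)
    (hR : R.PosDef) (ζ : Fin q → ℝ)
    (A B : Matrix (Fin q) (Fin (N + 1) × (Fin n ⊕ Fin n)) ℝ) :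
    ζ ⬝ᵥ (((b - a) • (A * (blockR n N R)⁻¹ * Aᵀ) + A * Bᵀ + B * Aᵀ).mulVec ζ)
    = 2 * (∑ j, ∑ c, (ζ ᵥ* A) (j, c) * (ζ ᵥ* B) (j, c)) +
      ∑ j : Fin (N + 1), ((b - a) / (2 * ((j : ℕ) : ℝ) + 1)) *
        ((fun c => (ζ ᵥ* A) (j, c)) ⬝ᵥ R⁻¹ *ᵥ (fun c => (ζ ᵥ* A) (j, c))) := by
  have hAB : ζ ⬝ᵥ (A * Bᵀ) *ᵥ ζ = ∑ j, ∑ c, (ζ ᵥ* A) (j, c) * (ζ ᵥ* B) (j, c) := by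
    rw [← Matrix.mulVec_mulVec, Matrix.dotProduct_mulVec, Matrix.mulVec_transpose, dotProduct,
      Fintype.sum_prod_type]
  have hBA : ζ ⬝ᵥ (B * Aᵀ) *ᵥ ζ = ∑ j, ∑ c, (ζ ᵥ* A) (j, c) * (ζ ᵥ* B) (j, c) := by
    rw [← Matrix.mulVec_mulVec, Matrix.dotProduct_mulVec, Matrix.mulVec_transpose, dotProduct,
      Fintype.sum_prod_type]
    simp only [mul_comm]
  have hAA : ζ ⬝ᵥ (A * (blockR n N R)⁻¹ * Aᵀ) *ᵥ ζ = ∑ j : Fin (N + 1),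
      (2 * ((j : ℕ) : ℝ) + 1)⁻¹ *
        ((fun c => (ζ ᵥ* A) (j, c)) ⬝ᵥ R⁻¹ *ᵥ (fun c => (ζ ᵥ* A) (j, c))) := by
    rw [← Matrix.mulVec_mulVec, ← Matrix.mulVec_mulVec, Matrix.dotProduct_mulVec,
      Matrix.mulVec_transpose, dotProduct, Fintype.sum_prod_type, blockR_inv n N R hR]
    apply Finset.sum_congr rfl
    intro j _
    rw [dotProduct, Finset.mul_sum]
    apply Finset.sum_congr rfl
    intro c _
    have : ((Matrix.of fun (p c : Fin (N + 1) × (Fin n ⊕ Fin n)) =>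
        if p.1 = c.1 then (2 * (p.1 : ℕ) + 1 : ℝ)⁻¹ * R⁻¹ p.2 c.2 else 0) *ᵥ (ζ ᵥ* A)) (j, c)
        = (2 * ((j : ℕ) : ℝ) + 1)⁻¹ * (R⁻¹ *ᵥ (fun c => (ζ ᵥ* A) (j, c))) c := by
      rw [Matrix.mulVec, dotProduct, Fintype.sum_prod_type, Finset.sum_eq_single j]
      · simp only [Matrix.mulVec, dotProduct, Finset.mul_sum, mul_assoc, Matrix.of_apply, if_true]
      · intro i _ hij
        simp [hij.symm]
      · simp
    rw [this]; ring
  rw [Matrix.add_mulVec, Matrix.add_mulVec, dotProduct_add, dotProduct_add, hAB, hBA,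
    Matrix.smul_mulVec, dotProduct_smul, hAA, smul_eq_mul, Finset.mul_sum]
  simp only [div_eq_mul_inv, mul_assoc]
  ring

/-- Generalized free-matrix-based integral inequality (Lemma 1): with
`ξ(s) = (ż(s), z(s))`, `R ≻ 0`, free matrices `Y_i` and moment matrices `M_i` satisfying
`M_{2j−1} ζ = ∫_a^b p_{j−1} ż` and `M_{2j} ζ = ∫_a^b p_{j−1} z`, one has
`−∫_a^b ξᵀ R ξ ≤ ζᵀ[(b−a) Ȳ R̄⁻¹ Ȳᵀ + Ȳ M̄ᵀ + M̄ Ȳᵀ]ζ`. -/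
theorem generalized_integral_inequality (n q N : ℕ) (hn : 1 ≤ n) (hq : 1 ≤ q)
    (a b : ℝ) (hab : a < b)
    (z z' : ℝ → Fin n → ℝ)
    (hz : ∀ s ∈ Set.Icc a b, HasDerivAt z (z' s) s)
    (hz' : ContinuousOn z' (Set.Icc a b))
    (R : Matrix (Fin n ⊕ Fin n) (Fin n ⊕ Fin n) ℝ) (hR : R.PosDef)
    (ζ : Fin q → ℝ)
    (Y : Fin (2 * N + 1) → Matrix (Fin q) (Fin n) ℝ)
    (M : Fin (2 * N + 1) → Matrix (Fin n) (Fin q) ℝ)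
    (hModd : ∀ j : Fin (N + 1),
      (M ⟨2 * (j : ℕ), by have := j.isLt; omega⟩).mulVec ζ
        = ∫ s in a..b, shiftedLegendre a b (j : ℕ) s • z' s)
    (hMeven : ∀ j : Fin N,
      (M ⟨2 * (j : ℕ) + 1, by have := j.isLt; omega⟩).mulVec ζ
        = ∫ s in a..b, shiftedLegendre a b (j : ℕ) s • z s) :
    -∫ s in a..b, (Sum.elim (z' s) (z s)) ⬝ᵥ (R.mulVec (Sum.elim (z' s) (z s)))
      ≤ ζ ⬝ᵥ (((b - a) • (blockY n q N Y * (blockR n N R)⁻¹ * (blockY n q N Y)ᵀ)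
          + blockY n q N Y * (blockM n q N M)ᵀ
          + blockM n q N M * (blockY n q N Y)ᵀ).mulVec ζ) := by
  have hzc : ContinuousOn z (Set.Icc a b) := fun s hs => (hz s hs).continuousAt.continuousWithinAt
  set ξ : ℝ → (Fin n ⊕ Fin n) → ℝ := fun s => Sum.elim (z' s) (z s) with hξ
  have hξc : ∀ c, ContinuousOn (fun s => ξ s c) (Set.Icc a b) := by
    intro c
    rcases c with c | c
    · exact (continuousOn_pi.1 hz') c
    · exact (continuousOn_pi.1 hzc) c
  have hint : ∀ f : ℝ → ℝ, ContinuousOn f (Set.Icc a b) →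
      IntervalIntegrable f MeasureTheory.volume a b := fun f hf =>
    ContinuousOn.intervalIntegrable (by rwa [Set.uIcc_of_le hab.le])
  have hpc : ∀ j, ContinuousOn (shiftedLegendre a b j) (Set.Icc a b) := fun j =>
    (shiftedLegendre_cont a b j).continuousOn
  have hcomp : ∀ (j : ℕ) (u : ℝ → Fin n → ℝ), ContinuousOn u (Set.Icc a b) → ∀ c,
      (∫ s in a..b, shiftedLegendre a b j s • u s) c
        = ∫ s in a..b, shiftedLegendre a b j s * u s c := by
    intro j u hu c
    have := (ContinuousLinearMap.proj (R := ℝ) (φ := fun _ : Fin n => ℝ) c).intervalIntegral_comp_comm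
      (μ := MeasureTheory.volume) (a := a) (b := b) (f := fun s => shiftedLegendre a b j s • u s)
      (ContinuousOn.intervalIntegrable (by rw [Set.uIcc_of_le hab.le]; exact (hpc j).smul hu))
    simpa using this.symm
  set y : Fin (N + 1) → (Fin n ⊕ Fin n) → ℝ := fun j c => (ζ ᵥ* blockY n q N Y) (j, c) with hy
  have hmom : ∀ (j : Fin (N + 1)) c, (ζ ᵥ* blockY n q N Y) (j, c) * (ζ ᵥ* blockM n q N M) (j, c)
      = ∫ s in a..b, y j c * (shiftedLegendre a b j s * ξ s c) := by
    intro j c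
    rw [intervalIntegral.integral_const_mul]
    rcases c with c | c
    · congr 1
      have h := congrFun (hModd j) c
      rw [hcomp j z' hz' c] at h
      refine Eq.trans ?_ h
      simp [Matrix.vecMul, Matrix.mulVec, dotProduct, blockM, mul_comm]
    · by_cases hj : (j : ℕ) < N
      · congr 1
        have h := congrFun (hMeven ⟨j, hj⟩) c
        rw [hcomp j z hzc c] at h
        refine Eq.trans ?_ h
        simp [Matrix.vecMul, Matrix.mulVec, dotProduct, blockM, mul_comm, hj]
      · have h0 : (ζ ᵥ* blockY n q N Y) (j, Sum.inr c) = 0 := by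
          simp [Matrix.vecMul, dotProduct, blockY, hj]
        simp only [hy, h0, zero_mul]
  rw [rhs_expand n q N a b R hR ζ]
  have hlin : ∀ j : Fin (N + 1), ContinuousOn
      (fun s => shiftedLegendre a b j s * (y j ⬝ᵥ ξ s)) (Set.Icc a b) := by
    intro j
    refine (hpc j).mul ?_
    simp only [dotProduct]
    exact continuousOn_finsetSum _ fun c _ => continuousOn_const.mul (hξc c)
  have e1 : ∑ j : Fin (N + 1), ∑ c, (ζ ᵥ* blockY n q N Y) (j, c) * (ζ ᵥ* blockM n q N M) (j, c)
      = ∫ s in a..b, ∑ j : Fin (N + 1), shiftedLegendre a b j s * (y j ⬝ᵥ ξ s) := by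
    rw [intervalIntegral.integral_finsetSum (fun j _ => hint _ (hlin j))]
    apply Finset.sum_congr rfl
    intro j _
    simp_rw [hmom]
    rw [← intervalIntegral.integral_finsetSum (fun c _ => hint
      (fun s => y j c * (shiftedLegendre a b j s * ξ s c)) (continuousOn_const.mul ((hpc j).mul (hξc c))))]
    congr 1
    ext s
    rw [dotProduct, Finset.mul_sum]
    apply Finset.sum_congr rfl
    intro c _
    ring
  have hquad : ∀ i j : Fin (N + 1), ContinuousOn (fun s => (shiftedLegendre a b i s *
      shiftedLegendre a b j s) * (y i ⬝ᵥ R⁻¹ *ᵥ y j)) (Set.Icc a b) := fun i j =>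
    ((hpc i).mul (hpc j)).mul continuousOn_const
  have e2 : ∑ j : Fin (N + 1), ((b - a) / (2 * ((j : ℕ) : ℝ) + 1)) * (y j ⬝ᵥ R⁻¹ *ᵥ y j)
      = ∫ s in a..b, ∑ i : Fin (N + 1), ∑ j : Fin (N + 1), (shiftedLegendre a b i s *
        shiftedLegendre a b j s) * (y i ⬝ᵥ R⁻¹ *ᵥ y j) := by
    rw [intervalIntegral.integral_finsetSum (fun i _ => hint _
      (continuousOn_finsetSum _ fun j _ => hquad i j))]
    apply Finset.sum_congr rfl
    intro i _
    rw [intervalIntegral.integral_finsetSum (fun j _ => hint _ (hquad i j))]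
    simp_rw [intervalIntegral.integral_mul_const, shiftedLegendre_orth a b hab]
    rw [Finset.sum_eq_single i]
    · simp
    · intro j _ hij
      have : (i : ℕ) ≠ j := fun h => hij (Fin.ext h.symm)
      simp [this]
    · simp
  have hc1 : ContinuousOn (fun s => 2 * ∑ j : Fin (N + 1), shiftedLegendre a b j s * (y j ⬝ᵥ ξ s))
      (Set.Icc a b) := continuousOn_const.mul (continuousOn_finsetSum _ fun j _ => hlin j)
  have hc2 : ContinuousOn (fun s => ∑ i : Fin (N + 1), ∑ j : Fin (N + 1), (shiftedLegendre a b i s *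
      shiftedLegendre a b j s) * (y i ⬝ᵥ R⁻¹ *ᵥ y j)) (Set.Icc a b) :=
    continuousOn_finsetSum _ fun i _ => continuousOn_finsetSum _ fun j _ => hquad i j
  have hc3 : ContinuousOn (fun s => ξ s ⬝ᵥ R *ᵥ ξ s) (Set.Icc a b) := by
    simp only [Matrix.mulVec, dotProduct]
    exact continuousOn_finsetSum _ fun c _ => (hξc c).mul
      (continuousOn_finsetSum _ fun d _ => continuousOn_const.mul (hξc d))
  rw [e1]
  refine le_trans ?_ (add_le_add_right e2.ge _)
  rw [← intervalIntegral.integral_const_mul, ← intervalIntegral.integral_add (hint _ hc1) (hint _ hc2),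
    ← intervalIntegral.integral_neg]
  exact intervalIntegral.integral_mono_on hab.le (hint _ hc3.neg) (hint _ (hc1.add hc2))
    fun s _ => quad_expand R hR y (fun j => shiftedLegendre a b j s) (ξ s)
end

section
/- Let m ≥ 2, n ≥ 1, A ∈ ℝ^{n×n}, B ∈ ℝ^{n×r}, K ∈ ℝ^{r×n}, let L ∈ ℝ^{m×m} satisfy L·1_m = 0, let E_k ∈ ℝ^{m×m} be the matrix with a single 1 at entry (k,k) and zeros elsewhere, and let τ_1, …, τ_m : ℝ → ℝ be delay functions. Suppose x : ℝ → ℝ^{mn} is differentiable and satisfies ẋ(t) = (I_m ⊗ A) x(t) − Σ_{k=1}^m (E_k L ⊗ (BK)) x(t − τ_k(t)) for all t. Set G = [1_{m−1} | −I_{m−1}], U = [0_{m−1} | −I_{m−1}]ᵀ, and define the error state z(t) = (G ⊗ I_n) x(t) ∈ ℝ^{(m−1)n}. Then z is differentiable and satisfies ż(t) = (I_{m−1} ⊗ A) z(t) − Σ_{k=1}^m (G E_k L U ⊗ (BK)) z(t − τ_k(t)) for all t. -/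
open Matrix Kronecker

/-- The tree-type transformation matrix `G = [1_{m−1} | −I_{m−1}] ∈ ℝ^{(m−1)×m}`. -/
def treeG (m : ℕ) : Matrix (Fin (m - 1)) (Fin m) ℝ := fun i j =>
  if (j : ℕ) = 0 then 1 else if (j : ℕ) = (i : ℕ) + 1 then -1 else 0

/-- The matrix `U = [0_{m−1} | −I_{m−1}]ᵀ ∈ ℝ^{m×(m−1)}` (zero first row, `−I_{m−1}` below). -/
def treeU (m : ℕ) : Matrix (Fin m) (Fin (m - 1)) ℝ := fun i j =>
  if (i : ℕ) = (j : ℕ) + 1 then -1 else 0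

/-- `E_k ∈ ℝ^{m×m}`: a single `1` at entry `(k,k)`, zeros elsewhere. -/
def Ediag (m : ℕ) (k : Fin m) : Matrix (Fin m) (Fin m) ℝ := fun i j =>
  if i = k ∧ j = k then 1 else 0

theorem treeU_mul_treeG (m : ℕ) (i j : Fin m) :
    (treeU m * treeG m) i j = (if i = j then 1 else 0) - (if (j : ℕ) = 0 then 1 else 0) := by
  rw [Matrix.mul_apply]
  by_cases hi : (i : ℕ) = 0
  · have h0 : ∀ k : Fin (m - 1), treeU m i k * treeG m k j = 0 := by
      intro k
      have : ¬ (i : ℕ) = (k : ℕ) + 1 := by omega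
      simp [treeU, this]
    rw [Finset.sum_eq_zero (fun k _ => h0 k)]
    by_cases hj : (j : ℕ) = 0
    · have : i = j := Fin.ext (by omega)
      simp [this, hj]
    · have : i ≠ j := fun h => hj (by rw [← h]; exact hi)
      simp [this, hj]
  · have hk : (i : ℕ) - 1 < m - 1 := by omega
    rw [Finset.sum_eq_single (⟨(i : ℕ) - 1, hk⟩ : Fin (m - 1))]
    · have h1 : (i : ℕ) = (i : ℕ) - 1 + 1 := by omega
      have h2 : (i : ℕ) - 1 + 1 = (i : ℕ) := by omega
      simp only [treeU, treeG, h2, if_true, Fin.ext_iff]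
      split_ifs <;> first | omega | norm_num
    · intro k _ hne
      have : ¬ (i : ℕ) = (k : ℕ) + 1 := by
        intro h
        exact hne (Fin.ext (by simp only; omega))
      simp [treeU, this]
    · simp

theorem L_mul_treeU_mul_treeG (m : ℕ) (L : Matrix (Fin m) (Fin m) ℝ)
    (hL : L.mulVec (fun _ => 1) = 0) : L * (treeU m * treeG m) = L := by
  ext i j
  rw [Matrix.mul_apply]
  have h := congrFun hL i
  simp only [Matrix.mulVec, dotProduct, mul_one, Pi.zero_apply] at h
  simp only [treeU_mul_treeG, mul_sub, Finset.sum_sub_distrib, ← Finset.sum_mul, h]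
  simp

/-- Tree-type transformation of the delayed multi-agent dynamics: if
`ẋ(t) = (I_m ⊗ A)x(t) − Σ_k (E_k L ⊗ BK) x(t−τ_k(t))` and `L·1_m = 0`, then the error
state `z(t) = (G ⊗ I_n)x(t)` satisfies
`ż(t) = (I_{m−1} ⊗ A) z(t) − Σ_k (G E_k L U ⊗ BK) z(t−τ_k(t))`. -/
theorem error_state_dynamics (m n r : ℕ) (hm : 2 ≤ m) (hn : 1 ≤ n)
    (A : Matrix (Fin n) (Fin n) ℝ) (B : Matrix (Fin n) (Fin r) ℝ)
    (K : Matrix (Fin r) (Fin n) ℝ)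
    (L : Matrix (Fin m) (Fin m) ℝ) (hL : L.mulVec (fun _ => 1) = 0)
    (τ : Fin m → ℝ → ℝ)
    (x : ℝ → Fin m × Fin n → ℝ)
    (hx : ∀ t : ℝ, HasDerivAt x
      (((1 : Matrix (Fin m) (Fin m) ℝ) ⊗ₖ A).mulVec (x t)
        - ∑ k : Fin m, ((Ediag m k * L) ⊗ₖ (B * K)).mulVec (x (t - τ k t))) t) :
    ∀ t : ℝ, HasDerivAt (fun t => (treeG m ⊗ₖ (1 : Matrix (Fin n) (Fin n) ℝ)).mulVec (x t))
      (((1 : Matrix (Fin (m - 1)) (Fin (m - 1)) ℝ) ⊗ₖ A).mulVec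
          ((treeG m ⊗ₖ (1 : Matrix (Fin n) (Fin n) ℝ)).mulVec (x t))
        - ∑ k : Fin m, ((treeG m * Ediag m k * L * treeU m) ⊗ₖ (B * K)).mulVec
            ((treeG m ⊗ₖ (1 : Matrix (Fin n) (Fin n) ℝ)).mulVec (x (t - τ k t)))) t := by
  intro t
  have h := ((Matrix.mulVecLin (treeG m ⊗ₖ (1 : Matrix (Fin n) (Fin n) ℝ))).toContinuousLinearMap.hasFDerivAt
    (x := x t)).comp_hasDerivAt t (hx t)
  refine HasDerivAt.congr_deriv h ?_
  simp only [LinearMap.coe_toContinuousLinearMap', Matrix.mulVecLin_apply, Matrix.mulVec_sub,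
    Matrix.mulVec_sum, Matrix.mulVec_mulVec, ← Matrix.mul_kronecker_mul, Matrix.one_mul,
    Matrix.mul_one]
  congr 1
  refine Finset.sum_congr rfl fun k _ => ?_
  rw [Matrix.mul_assoc _ (treeU m), Matrix.mul_assoc _ L, L_mul_treeU_mul_treeG m L hL,
    Matrix.mul_assoc]
end
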